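/- Let e be an execution of a program P ending in state s, let a be a map variable, let j be an index value, and suppose lastwrite(a, j, e) = w ≠ ⊥ where w is the map-write statement b:=b[i:=x]. Then w occurs as some statement σ_k of e, the state s_k in which σ_k is executed satisfies s_k(i) = j, and the value of a at index j in the final state satisfies s(a)(j) = s_k(x). -/

import Mathlib

open scoped Classical

namespace IVL

/-- Expressions of base type: literals, base variables, and map reads `a[i]`. -/
inductive BExpr (V BVar MVar : Type) : Type where
  | lit  : V → BExpr V BVar MVar
  | var  : BVar → BExpr V BVar MVar
  | read : MVar → BVar → BExpr V BVar MVar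

/-- Boolean expressions: equalities of base variables, closed under ¬, ∧, ∨. -/
inductive BoolExpr (BVar : Type) : Type where
  | eq  : BVar → BVar → BoolExpr BVar
  | not : BoolExpr BVar → BoolExpr BVar
  | and : BoolExpr BVar → BoolExpr BVar → BoolExpr BVar
  | or  : BoolExpr BVar → BoolExpr BVar → BoolExpr BVar

/-- Commands. -/
inductive Cmd (V BVar MVar : Type) : Type where
  | assign    : BVar → BExpr V BVar MVar → Cmd V BVar MVar      -- x := e
  | assignMap : MVar → MVar → Cmd V BVar MVar                   -- a := b
  | store     : MVar → BVar → BVar → Cmd V BVar MVar            -- a := a[i := x]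
  | constMap  : MVar → V → Cmd V BVar MVar                      -- a := const(lit)
  | havoc     : BVar → Cmd V BVar MVar                          -- havoc x
  | havocMap  : MVar → Cmd V BVar MVar                          -- havoc a
  | assume    : BoolExpr BVar → Cmd V BVar MVar                 -- assume e

/-- A statement is a triple (source location, command, target location). -/
abbrev Stmt (V BVar MVar Loc : Type) : Type := Loc × Cmd V BVar MVar × Loc

/-- A program: a control-flow graph with statements as edges and an initial
location with no incoming edges. -/
structure Program (V BVar MVar Loc : Type) : Type where
  stmts : Set (Stmt V BVar MVar Loc)
  init : Loc
  no_incoming : ∀ σ ∈ stmts, σ.2.2 ≠ init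

/-- A state: a program counter, a valuation of base variables, a valuation of
map variables. -/
structure PState (V BVar MVar Loc : Type) : Type where
  pc : Loc
  base : BVar → V
  mapv : MVar → V → V

variable {V BVar MVar Loc : Type}

def evalBoolOn (b : BVar → V) : BoolExpr BVar → Prop
  | .eq x y => b x = b y
  | .not e => ¬ evalBoolOn b e
  | .and e1 e2 => evalBoolOn b e1 ∧ evalBoolOn b e2
  | .or e1 e2 => evalBoolOn b e1 ∨ evalBoolOn b e2

def evalB (s : PState V BVar MVar Loc) : BExpr V BVar MVar → V
  | .lit v => v
  | .var x => s.base x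
  | .read a i => s.mapv a (s.base i)

/-- Strongest-postcondition semantics of a single statement, as a relation
between a pre-state and a post-state. -/
def post (σ : Stmt V BVar MVar Loc) (s s' : PState V BVar MVar Loc) : Prop :=
  s.pc = σ.1 ∧ s'.pc = σ.2.2 ∧
  match σ.2.1 with
  | .assign x e => s'.base = Function.update s.base x (evalB s e) ∧ s'.mapv = s.mapv
  | .assignMap a b => s'.base = s.base ∧ s'.mapv = Function.update s.mapv a (s.mapv b)
  | .store a i x => s'.base = s.base ∧
      s'.mapv = Function.update s.mapv a (Function.update (s.mapv a) (s.base i) (s.base x))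
  | .constMap a v => s'.base = s.base ∧ s'.mapv = Function.update s.mapv a (fun _ => v)
  | .havoc x => (∃ v, s'.base = Function.update s.base x v) ∧ s'.mapv = s.mapv
  | .havocMap a => s'.base = s.base ∧ ∃ m, s'.mapv = Function.update s.mapv a m
  | .assume e => evalBoolOn s.base e ∧ s'.base = s.base ∧ s'.mapv = s.mapv

/-- Executions of a program `P`, indexed by their final state. -/
inductive Exec (P : Program V BVar MVar Loc) : PState V BVar MVar Loc → Type where
  | init : ∀ s : PState V BVar MVar Loc, s.pc = P.init → Exec P s
  | step : ∀ {s : PState V BVar MVar Loc}, Exec P s → ∀ σ : Stmt V BVar MVar Loc,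
      σ ∈ P.stmts → ∀ s' : PState V BVar MVar Loc, post σ s s' → Exec P s'

/-- Reachable states: states in which some execution ends. -/
def Reach (P : Program V BVar MVar Loc) : Set (PState V BVar MVar Loc) :=
  {s | Nonempty (Exec P s)}

/-- The final state of an execution (= the state in which the next statement
would be executed). -/
def preOf {P : Program V BVar MVar Loc} {s : PState V BVar MVar Loc}
    (_ : Exec P s) : PState V BVar MVar Loc := s

/-- `lastwrite a j e` traces back, within the execution `e`, the map write
statement responsible for the value of map `a` at index `j` in the final
state of `e` (`none` represents the symbol ⊥). -/
noncomputable def lastwrite {P : Program V BVar MVar Loc} (a : MVar) (j : V) :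
    {s : PState V BVar MVar Loc} → Exec P s → Option (Stmt V BVar MVar Loc)
  | _, .init _ _ => none
  | _, .step e σ _ s' _ =>
    match σ with
    | (_, Cmd.havocMap b, _) => if b = a then none else lastwrite a j e
    | (_, Cmd.constMap b _, _) => if b = a then none else lastwrite a j e
    | (_, Cmd.store b i _, _) =>
        if b = a then (if s'.base i = j then some σ else lastwrite a j e)
        else lastwrite a j e
    | (_, Cmd.assignMap b c, _) => if b = a then lastwrite c j e else lastwrite a j e
    | _ => lastwrite a j e

def IsWrite (σ : Stmt V BVar MVar Loc) : Prop := ∃ a i x, σ.2.1 = Cmd.store a i x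

def IsRead (σ : Stmt V BVar MVar Loc) : Prop :=
  ∃ x a i, σ.2.1 = Cmd.assign x (BExpr.read a i)

def WriteStmts (P : Program V BVar MVar Loc) : Set (Stmt V BVar MVar Loc) :=
  {σ | σ ∈ P.stmts ∧ IsWrite σ}

def ReadStmts (P : Program V BVar MVar Loc) : Set (Stmt V BVar MVar Loc) :=
  {σ | σ ∈ P.stmts ∧ IsRead σ}

/-- The Last Writes relation of `P`: `(w, rd)` is in it iff `rd` is a read
statement `(ℓ, x:=a[i], ℓ')` of `P` and some execution ends in a state `s`
with `s(pc) = ℓ` and `lastwrite(a, s(i), e) = w ≠ ⊥`. -/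
def lastwrites (P : Program V BVar MVar Loc) (w rd : Stmt V BVar MVar Loc) : Prop :=
  rd ∈ P.stmts ∧
  ∃ x a i, rd.2.1 = Cmd.assign x (BExpr.read a i) ∧
    ∃ s : PState V BVar MVar Loc, ∃ e : Exec P s,
      s.pc = rd.1 ∧ lastwrite a (s.base i) e = some w

/-! ### The instrumented program `P_pre` -/

/-- Ghost valuation: for each map variable `a`, the ghost map `a-lw`, whose
values are write statements or ⊥ (`none`). -/
abbrev Ghost (V BVar MVar Loc : Type) : Type := MVar → V → Option (Stmt V BVar MVar Loc)

/-- The (deterministic) effect of the ghost code added by the instrumentation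
to the statement `σ`, given the post-state `s'` of the original statement. -/
noncomputable def ghostStep (P : Program V BVar MVar Loc) (σ : Stmt V BVar MVar Loc)
    (s' : PState V BVar MVar Loc) (g : Ghost V BVar MVar Loc) : Ghost V BVar MVar Loc :=
  if σ.1 = P.init then fun _ _ => none
  else
    match σ with
    | (_, Cmd.store a i _, _) =>
        Function.update g a (Function.update (g a) (s'.base i) (some σ))
    | (_, Cmd.havocMap a, _) => Function.update g a (fun _ => none)
    | (_, Cmd.constMap a _, _) => Function.update g a (fun _ => none)
    | (_, Cmd.assignMap a b, _) => Function.update g a (g b)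
    | _ => g

/-- Post relation of the instrumented statement `ι(σ)` of `P_pre`, on states
extended with the ghost maps. -/
def postPre (P : Program V BVar MVar Loc) (σ : Stmt V BVar MVar Loc)
    (t t' : PState V BVar MVar Loc × Ghost V BVar MVar Loc) : Prop :=
  post σ t.1 t'.1 ∧ t'.2 = ghostStep P σ t'.1 t.2

/-- Initial states of the instrumented program (ghost maps hold ⊥ everywhere). -/
def InitPre (P : Program V BVar MVar Loc) :
    Set (PState V BVar MVar Loc × Ghost V BVar MVar Loc) :=
  {t | t.1.pc = P.init ∧ t.2 = fun _ _ => none}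

/-- Executions of the instrumented program `P_pre`. -/
inductive ExecPre (P : Program V BVar MVar Loc) :
    PState V BVar MVar Loc × Ghost V BVar MVar Loc → Type where
  | init : ∀ t, t ∈ InitPre P → ExecPre P t
  | step : ∀ {t}, ExecPre P t → ∀ σ : Stmt V BVar MVar Loc, σ ∈ P.stmts →
      ∀ t', postPre P σ t t' → ExecPre P t'

/-- Reachable states of the instrumented program `P_pre`. -/
def ReachPre (P : Program V BVar MVar Loc) :
    Set (PState V BVar MVar Loc × Ghost V BVar MVar Loc) :=
  {t | Nonempty (ExecPre P t)}

/-- Erasing the ghost assignments from an execution of `P_pre` yields an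
execution of `P`. -/
def ExecPre.proj {P : Program V BVar MVar Loc} :
    {t : PState V BVar MVar Loc × Ghost V BVar MVar Loc} → ExecPre P t → Exec P t.1
  | _, .init t h => Exec.init t.1 h.1
  | _, .step e σ hσ t' h => Exec.step (ExecPre.proj e) σ hσ t'.1 h.1

/-! ### Bisimulation -/

/-- `B` is a bisimulation between two transition systems whose transitions are
indexed by the statements of `P` (via the statement correspondence). -/
def IsBisim {S1 S2 A : Type} (stmts : Set A)
    (post1 : A → S1 → S1 → Prop) (post2 : A → S2 → S2 → Prop)
    (B : S1 → S2 → Prop) : Prop :=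
  ∀ s t, B s t → ∀ σ ∈ stmts,
    (∀ s', post1 σ s s' → ∃ t', post2 σ t t' ∧ B s' t') ∧
    (∀ t', post2 σ t t' → ∃ s', post1 σ s s' ∧ B s' t')

/-- Bisimulation equivalence (with designated sets of initial states). -/
def BisimEquiv {S1 S2 A : Type} (stmts : Set A)
    (post1 : A → S1 → S1 → Prop) (post2 : A → S2 → S2 → Prop)
    (init1 : Set S1) (init2 : Set S2) : Prop :=
  ∃ B, IsBisim stmts post1 post2 B ∧
    (∀ s ∈ init1, ∃ t ∈ init2, B s t) ∧
    (∀ t ∈ init2, ∃ s ∈ init1, B s t)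

/-! ### The transformed program `P'` -/

/-- `R` relates two writes iff some read is `L`-related to both. -/
def Rrel (L : Stmt V BVar MVar Loc → Stmt V BVar MVar Loc → Prop)
    (w w' : Stmt V BVar MVar Loc) : Prop :=
  ∃ rd, L w rd ∧ L w' rd

/-- The block (equivalence class of the equivalence closure of `Rrel L`,
within the write statements of `P`) of the write `w`, as a set of
`Option`-statements (`some` of the writes in the class). -/
def blockOf (P : Program V BVar MVar Loc)
    (L : Stmt V BVar MVar Loc → Stmt V BVar MVar Loc → Prop)
    (w : Stmt V BVar MVar Loc) : Set (Option (Stmt V BVar MVar Loc)) :=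
  {o | ∃ w', w' ∈ WriteStmts P ∧ Relation.EqvGen (Rrel L) w w' ∧ o = some w'}

/-- The blocks of the partition: the equivalence classes of writes of `P`,
plus the extra singleton block `{⊥}`. -/
def Writeblocks (P : Program V BVar MVar Loc)
    (L : Stmt V BVar MVar Loc → Stmt V BVar MVar Loc → Prop) :
    Set (Set (Option (Stmt V BVar MVar Loc))) :=
  {C | ∃ w ∈ WriteStmts P, C = blockOf P L w} ∪ {{none}}

/-- A state of the transformed program `P'`: each map variable `a` of `P` is
split into variables `a_W`, one for each block `W`. -/
structure TState (V BVar MVar Loc : Type) : Type where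
  pc : Loc
  base : BVar → V
  mapv : MVar → Set (Option (Stmt V BVar MVar Loc)) → V → V

/-- Post relation of the transformed statement `τ(σ)` of `P'`. -/
def postTrans (P : Program V BVar MVar Loc)
    (L : Stmt V BVar MVar Loc → Stmt V BVar MVar Loc → Prop)
    (σ : Stmt V BVar MVar Loc) (t t' : TState V BVar MVar Loc) : Prop :=
  t.pc = σ.1 ∧ t'.pc = σ.2.2 ∧
  match σ.2.1 with
  | Cmd.assign x (BExpr.read a i) =>
      t'.mapv = t.mapv ∧
      ∃ W, (((∀ w, ¬ L w σ) ∧ W = {none}) ∨ (∃ w, L w σ ∧ W = blockOf P L w)) ∧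
        t'.base = Function.update t.base x (t.mapv a W (t.base i))
  | Cmd.assign x (BExpr.lit v) =>
      t'.mapv = t.mapv ∧ t'.base = Function.update t.base x v
  | Cmd.assign x (BExpr.var y) =>
      t'.mapv = t.mapv ∧ t'.base = Function.update t.base x (t.base y)
  | Cmd.assignMap a b => t'.base = t.base ∧
      t'.mapv = Function.update t.mapv a (t.mapv b)
  | Cmd.store a i x => t'.base = t.base ∧
      t'.mapv = Function.update t.mapv a
        (Function.update (t.mapv a) (blockOf P L σ)
          (Function.update (t.mapv a (blockOf P L σ)) (t.base i) (t.base x)))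
  | Cmd.constMap a v => t'.base = t.base ∧
      t'.mapv = Function.update t.mapv a (fun _ _ => v)
  | Cmd.havoc x => (∃ v, t'.base = Function.update t.base x v) ∧ t'.mapv = t.mapv
  | Cmd.havocMap a => t'.base = t.base ∧ (∀ b, b ≠ a → t'.mapv b = t.mapv b) ∧
      ∀ W ∈ Writeblocks P L, ∀ W' ∈ Writeblocks P L, t'.mapv a W = t'.mapv a W'
  | Cmd.assume e => evalBoolOn t.base e ∧ t'.base = t.base ∧ t'.mapv = t.mapv


/-- `OccursIn e τ u` : the statement `τ` occurs as some statement `σ_k` of the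
execution `e`, and `u` is the state `s_k` in which it is executed. -/
def OccursIn {P : Program V BVar MVar Loc} :
    {s : PState V BVar MVar Loc} → Exec P s → Stmt V BVar MVar Loc →
      PState V BVar MVar Loc → Prop
  | _, .init _ _, _, _ => False
  | _, .step e σ _ _ _, τ, u => (τ = σ ∧ u = preOf e) ∨ OccursIn e τ u

/-!
Look at one entry `a[j]` across a single step: it is either overwritten with an arbitrary or literal
value, or stored by the step's own statement, or it equals the entry `c[j]` of some map `c` before
the step. `lastwrite` stops in the first two cases and follows `c` in the third, so the value of the
entry is constant along the backward trace, down to the write where the trace stops.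
-/

/-- Where the entry `a[j]` of a map `a` in the post-state of a statement comes from: an arbitrary or
literal value (`overwritten`), the store performed by the statement itself (`stored`), or the entry
`c[j]` of a map `c` in the pre-state (`copied c`). -/
inductive EntryOrigin (MVar : Type) : Type where
  | overwritten : EntryOrigin MVar
  | stored : EntryOrigin MVar
  | copied : MVar → EntryOrigin MVar

/-- The origin of the entry `a[j]` after executing `σ`. Like `lastwrite`, it evaluates the index of
a store in the post-state `s'`; stores leave the base variables alone, so the pre-state would do. -/
noncomputable def entryOrigin (σ : Stmt V BVar MVar Loc) (s' : PState V BVar MVar Loc)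
    (a : MVar) (j : V) : EntryOrigin MVar :=
  match σ.2.1 with
  | .havocMap b | .constMap b _ => if b = a then .overwritten else .copied a
  | .store b i _ => if b = a ∧ s'.base i = j then .stored else .copied a
  | .assignMap b c => .copied (if b = a then c else a)
  | .assign _ _ | .havoc _ | .assume _ => .copied a

/-- `Stores σ s j v`: the statement `σ` is a map write which, executed in the state `s`, stores the
value `v` at the index `j`. -/
def Stores (σ : Stmt V BVar MVar Loc) (s : PState V BVar MVar Loc) (j v : V) : Prop :=
  ∃ b i x, σ.2.1 = Cmd.store b i x ∧ s.base i = j ∧ s.base x = v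

section Step

variable {σ : Stmt V BVar MVar Loc} {s s' : PState V BVar MVar Loc} {a c : MVar} {j : V}

theorem mapv_eq_of_entryOrigin_eq_copied (hpost : post σ s s')
    (horigin : entryOrigin σ s' a j = .copied c) : s'.mapv a j = s.mapv c j := by
  obtain ⟨ℓ, cmd, ℓ'⟩ := σ
  obtain ⟨-, -, heffect⟩ := hpost
  cases cmd with
  | assign | havoc =>
    obtain rfl : a = c := EntryOrigin.copied.inj horigin
    rw [heffect.2]
  | assume =>
    obtain rfl : a = c := EntryOrigin.copied.inj horigin
    rw [heffect.2.2]
  | assignMap b d =>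
    obtain rfl : (if b = a then d else a) = c := EntryOrigin.copied.inj horigin
    rw [heffect.2]
    by_cases hb : b = a
    · subst hb
      rw [Function.update_self, if_pos rfl]
    · rw [Function.update_of_ne (Ne.symm hb), if_neg hb]
  | constMap b v =>
    obtain ⟨hne, rfl⟩ : b ≠ a ∧ a = c := by grind [entryOrigin]
    rw [heffect.2, Function.update_of_ne hne.symm]
  | havocMap b =>
    obtain ⟨hne, rfl⟩ : b ≠ a ∧ a = c := by grind [entryOrigin]
    obtain ⟨-, m, hmapv⟩ := heffect
    rw [hmapv, Function.update_of_ne hne.symm]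
  | store b i x =>
    obtain ⟨hne, rfl⟩ : ¬(b = a ∧ s'.base i = j) ∧ a = c := by grind [entryOrigin]
    rw [heffect.1] at hne
    rw [heffect.2]
    by_cases hb : b = a
    · subst hb
      have hindex : j ≠ s.base i := fun h => hne ⟨rfl, h.symm⟩
      rw [Function.update_self, Function.update_of_ne hindex]
    · rw [Function.update_of_ne (Ne.symm hb)]

theorem stores_of_entryOrigin_eq_stored (hpost : post σ s s')
    (horigin : entryOrigin σ s' a j = .stored) : Stores σ s j (s'.mapv a j) := by
  obtain ⟨ℓ, cmd, ℓ'⟩ := σ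
  obtain ⟨-, -, heffect⟩ := hpost
  cases cmd with
  | store b i x =>
    obtain ⟨rfl, rfl⟩ : b = a ∧ s'.base i = j := by simpa [entryOrigin] using horigin
    exact ⟨b, i, x, rfl, by rw [heffect.1], by simp [heffect.1, heffect.2]⟩
  | _ => grind [entryOrigin]

theorem lastwrite_step {P : Program V BVar MVar Loc} (e : Exec P s) (hσ : σ ∈ P.stmts)
    (hpost : post σ s s') :
    lastwrite a j (.step e σ hσ s' hpost) =
      match entryOrigin σ s' a j with
      | .overwritten => none
      | .stored => some σ
      | .copied c => lastwrite c j e := by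
  obtain ⟨ℓ, cmd, ℓ'⟩ := σ
  cases cmd <;> grind [lastwrite, entryOrigin]

end Step

theorem exists_occursIn_stores_of_lastwrite_eq_some {P : Program V BVar MVar Loc}
    {s : PState V BVar MVar Loc} (e : Exec P s) {a : MVar} {j : V} {w : Stmt V BVar MVar Loc}
    (hw : lastwrite a j e = some w) :
    ∃ sk, OccursIn e w sk ∧ Stores w sk j (s.mapv a j) := by
  induction e generalizing a with
  | init => simp [lastwrite] at hw
  | @step s e σ hσ s' hpost ih =>
    rw [lastwrite_step] at hw
    cases horigin : entryOrigin σ s' a j with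
    | overwritten => simp [horigin] at hw
    | stored =>
      obtain rfl : σ = w := by simpa [horigin] using hw
      exact ⟨s, .inl ⟨rfl, rfl⟩, stores_of_entryOrigin_eq_stored hpost horigin⟩
    | copied c =>
      obtain ⟨sk, hoccurs, hstores⟩ := ih (by simpa only [horigin] using hw)
      rw [mapv_eq_of_entryOrigin_eq_copied hpost horigin]
      exact ⟨sk, .inr hoccurs, hstores⟩

/-- Let `e` be an execution of `P` ending in state `s`, let `a`
be a map variable and `j` an index value, and suppose
`lastwrite(a, j, e) = w ≠ ⊥` where `w` is the map-write statement
`(ℓ, b:=b[i:=x], ℓ')`.  Then `w` occurs as some statement of `e`, the state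
`sk` in which it is executed satisfies `sk(i) = j`, and the value of `a` at
index `j` in the final state satisfies `s(a)(j) = sk(x)`. -/
theorem lastwrite_occurs_and_writes_value
    (P : Program V BVar MVar Loc)
    {s : PState V BVar MVar Loc} (e : Exec P s) (a : MVar) (j : V)
    (w : Stmt V BVar MVar Loc) (hw : lastwrite a j e = some w)
    (ℓ ℓ' : Loc) (b : MVar) (i x : BVar)
    (hform : w = (ℓ, Cmd.store b i x, ℓ')) :
    ∃ sk : PState V BVar MVar Loc,
      OccursIn e w sk ∧ sk.base i = j ∧ s.mapv a j = sk.base x := by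
  subst hform
  obtain ⟨sk, hoccurs, b', i', x', hcmd, hindex, hvalue⟩ :=
    exists_occursIn_stores_of_lastwrite_eq_some e hw
  obtain ⟨rfl, rfl, rfl⟩ := Cmd.store.inj hcmd
  exact ⟨sk, hoccurs, hindex, hvalue.symm⟩

end IVL
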